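/- Under Assumptions (A), (B), (C) for the general-signal gradient descent, there exist positive constants c̃1, c̃2, c̃3, c̃4, c̃10, c̃11 such that for every iteration t satisfying c̃1·log(p/α)/(ηm) ≤ t ≤ c̃2/(ητ) with τ = max{δα, σ√((log p)/n)}, with probability at least 1 − p^{−c̃3} − n^{−c̃4}, for every threshold λ ∈ [c̃10/p, c̃11·σ√((log p)/n)], the hard-thresholded estimator β'_t defined by β'_{t,j} = g_{t,j}·l_{t,j} if |g_{t,j}·l_{t,j}| ≥ λ and β'_{t,j} = 0 otherwise, achieves exact strong-signal selection: {j : β'_{t,j} ≠ 0} = S1. -/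

import Mathlib

open MeasureTheory ProbabilityTheory Matrix Filter Topology

noncomputable section

/-- Hadamard (entrywise) product of two vectors. -/
def had {p : ℕ} (u v : Fin p → ℝ) : Fin p → ℝ := fun j => u j * v j

/-- Euclidean norm of a vector. -/
def nrm2 {p : ℕ} (v : Fin p → ℝ) : ℝ := Real.sqrt (∑ j, (v j) ^ 2)

/-- ℓ1 norm of a vector. -/
def nrm1 {p : ℕ} (v : Fin p → ℝ) : ℝ := ∑ j, |v j|

/-- Sup norm of a vector. -/
def nrmInf {p : ℕ} (v : Fin p → ℝ) : ℝ := ⨆ j, |v j|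

/-- A vector is `s`-sparse if it has at most `s` nonzero entries. -/
def Sparse {p : ℕ} (s : ℕ) (v : Fin p → ℝ) : Prop := {j | v j ≠ 0}.ncard ≤ s

/-- The `(s, δ)`-Restricted Isometry Property:
`(1−δ)‖u‖² ≤ n⁻¹‖Xu‖² ≤ (1+δ)‖u‖²` for all `s`-sparse `u`. -/
def RIP {n p : ℕ} (X : Matrix (Fin n) (Fin p) ℝ) (s : ℕ) (δ : ℝ) : Prop :=
  ∀ u : Fin p → ℝ, Sparse s u →
    (1 - δ) * nrm2 u ^ 2 ≤ (n : ℝ)⁻¹ * nrm2 (X.mulVec u) ^ 2 ∧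
      (n : ℝ)⁻¹ * nrm2 (X.mulVec u) ^ 2 ≤ (1 + δ) * nrm2 u ^ 2

/-- `k`-th largest absolute entry of a vector. -/
def theta {p : ℕ} (k : ℕ) (v : Fin p → ℝ) : ℝ :=
  (List.insertionSort (· ≥ ·) (List.ofFn fun j => |v j|)).getD (k - 1) 0

/-- Support of a vector. -/
def suppSet {p : ℕ} (β : Fin p → ℝ) : Set (Fin p) := {i | β i ≠ 0}

/-- Strong-signal index set `S1 = {i ∈ S : |β*_i| ≥ 2σ(log p)√((log p)/n)}`. -/
def strongSet {p : ℕ} (n : ℕ) (β : Fin p → ℝ) (σ : ℝ) : Set (Fin p) :=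
  {i | β i ≠ 0 ∧ 2 * σ * Real.log p * Real.sqrt (Real.log p / (n : ℝ)) ≤ |β i|}

/-- Weak-signal index set `S2 = {i ∈ S : |β*_i| ≤ 2σ√((log p)/n)}`. -/
def weakSet {p : ℕ} (n : ℕ) (β : Fin p → ℝ) (σ : ℝ) : Set (Fin p) :=
  {i | β i ≠ 0 ∧ |β i| ≤ 2 * σ * Real.sqrt (Real.log p / (n : ℝ))}

/-- The gradient-type term `n⁻¹ Xᵀ(Xβ − y)`. -/
def gradTerm {n p : ℕ} (X : Matrix (Fin n) (Fin p) ℝ) (y : Fin n → ℝ) (β : Fin p → ℝ) :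
    Fin p → ℝ :=
  (n : ℝ)⁻¹ • Xᵀ.mulVec (X.mulVec β - y)

/-- Assumptions (A), (B), (C) of the paper: `β*` is `s`-sparse with `s = s1 + s2` strong/weak
signals, `κ·m ≤ C`, `X` satisfies the `(s+1, δ)`-RIP with `δ ≤ c/(κ√s·log(p/α))`,
`0 < α ≤ c/p` and `0 < η ≤ c/(κ·log(p/α))`.  Here `m = θ_{s1}(β*)` and `κ = ‖β*‖_∞/m`. -/
def Assumptions {n p : ℕ} (s s1 s2 : ℕ) (X : Matrix (Fin n) (Fin p) ℝ)
    (βs : Fin p → ℝ) (σ α η δ C c : ℝ) : Prop :=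
  0 < n ∧ 0 < p ∧ 0 ≤ σ ∧ 0 ≤ δ ∧
  Sparse s βs ∧ (suppSet βs).ncard = s ∧
  (strongSet n βs σ).ncard = s1 ∧ (weakSet n βs σ).ncard = s2 ∧
  s = s1 + s2 ∧ suppSet βs = strongSet n βs σ ∪ weakSet n βs σ ∧
  (nrmInf βs / theta s1 βs) * theta s1 βs ≤ C ∧
  RIP X (s + 1) δ ∧
  δ ≤ c / ((nrmInf βs / theta s1 βs) * Real.sqrt s * Real.log ((p : ℝ) / α)) ∧
  0 < α ∧ α ≤ c / (p : ℝ) ∧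
  0 < η ∧ η ≤ c / ((nrmInf βs / theta s1 βs) * Real.log ((p : ℝ) / α))

/-- The statistical error level `ε = max{α², σ²Ms1/n, σ²s2(log p)/n}`. -/
def epsStat (n p s1 s2 : ℕ) (σ α M : ℝ) : ℝ :=
  max (α ^ 2) (max (σ ^ 2 * M * (s1 : ℝ) / (n : ℝ)) (σ ^ 2 * (s2 : ℝ) * Real.log p / (n : ℝ)))

/-- The level `τ = max{δα, σ√((log p)/n)}`. -/
def tauStat (n p : ℕ) (σ α δ : ℝ) : ℝ :=
  max (δ * α) (σ * Real.sqrt (Real.log p / (n : ℝ)))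

/-- Law of a random vector in ℝⁿ with i.i.d. `N(0, σ²)` entries. -/
def noiseMeasure (n : ℕ) (σ : ℝ) : Measure (Fin n → ℝ) :=
  Measure.pi fun _ => gaussianReal 0 (σ ^ 2).toNNReal

/-- Gradient descent iterates for the Hadamard parametrization `β = g∘l`:
`g₀ = α·𝟏`, `l₀ = 0`, `g_{t+1} = g_t − η·l_t ∘ [n⁻¹Xᵀ(X(g_t∘l_t) − y)]`,
`l_{t+1} = l_t − η·g_t ∘ [n⁻¹Xᵀ(X(g_t∘l_t) − y)]`. -/
def glIter {n p : ℕ} (X : Matrix (Fin n) (Fin p) ℝ) (y : Fin n → ℝ) (η α : ℝ) :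
    ℕ → (Fin p → ℝ) × (Fin p → ℝ)
  | 0 => (fun _ => α, fun _ => 0)
  | t + 1 =>
      ((glIter X y η α t).1 -
          η • had (glIter X y η α t).2
            (gradTerm X y (had (glIter X y η α t).1 (glIter X y η α t).2)),
        (glIter X y η α t).2 -
          η • had (glIter X y η α t).1
            (gradTerm X y (had (glIter X y η α t).1 (glIter X y η α t).2)))

/-!
In the coordinates `a = g + l`, `b = g - l` each entry of the iteration is multiplicative,
`a ↦ a (1 + ηq)` and `b ↦ b (1 - ηq)` with `q` the negative gradient, and the restricted isometry
property decouples the entries: `q` equals `β* - g l` up to an error of order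
`δ√s ‖g ∘ l - β*‖_∞ + σ√(log p / n)`. On the event, of probability at least `1 - 1/p`, that the
noise part of the gradient is at most `4σ√(log p / n)` in every coordinate, two regimes follow by
a joint induction on `t`. On a strong coordinate the signal grows geometrically until time
`4 log(p/α)/(ηm)` and then contracts to its target, so the design error decays geometrically. Hence
the errors seen by the other coordinates sum to at most `1/(2η)` up to time `1/(100ητ)`, and these
coordinates grow by at most a factor `e^{1/2}`: they stay below `α² < 1/p`, whereas strong ones
are above `m/8`.

If the two windows, for `t` and for the threshold, are nonempty, then `4/p ≤ σ√(log p / n)` and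
`400 log(p/α) σ√(log p / n) ≤ m`; otherwise there is nothing to prove.
-/

/-! ### Restricted isometry -/

lemma nrm2_sq {p : ℕ} (v : Fin p → ℝ) : nrm2 v ^ 2 = v ⬝ᵥ v := by
  rw [nrm2, Real.sq_sqrt (by positivity)]
  simp only [dotProduct, sq]

lemma nrm2_nonneg {p : ℕ} (v : Fin p → ℝ) : 0 ≤ nrm2 v := Real.sqrt_nonneg _

lemma eq_zero_of_nrm2_eq_zero {p : ℕ} {v : Fin p → ℝ} (hv : nrm2 v = 0) : v = 0 :=
  dotProduct_self_eq_zero.1 (by rw [← nrm2_sq, hv, sq, mul_zero])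

lemma nrm2_single_one {p : ℕ} (j : Fin p) : nrm2 (Pi.single j 1) = 1 := by
  simp [nrm2, Pi.single_apply]

lemma nrm2_le_sqrt_card_mul {p : ℕ} {S : Finset (Fin p)} {v : Fin p → ℝ} {M : ℝ} (hM : 0 ≤ M)
    (hv : ∀ k ∈ S, |v k| ≤ M) (hv0 : ∀ k ∉ S, v k = 0) : nrm2 v ≤ √(S.card) * M := by
  refine Real.sqrt_le_iff.2 ⟨by positivity, ?_⟩
  calc ∑ k, v k ^ 2 = ∑ k ∈ S, v k ^ 2 :=
        (Finset.sum_subset S.subset_univ fun k _ hk => by rw [hv0 k hk, sq, mul_zero]).symm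
    _ ≤ ∑ _k ∈ S, M ^ 2 := Finset.sum_le_sum fun k hk => sq_le_sq' (abs_le.1 (hv k hk)).1
        (abs_le.1 (hv k hk)).2
    _ = (√(S.card) * M) ^ 2 := by
        rw [Finset.sum_const, nsmul_eq_mul, mul_pow, Real.sq_sqrt (Nat.cast_nonneg _)]

lemma sparse_of_eq_zero_off {p s : ℕ} {S : Finset (Fin p)} (hS : S.card ≤ s) {v : Fin p → ℝ}
    (hv : ∀ k ∉ S, v k = 0) : Sparse s v := by
  have hsub : {k | v k ≠ 0} ⊆ (S : Set (Fin p)) := fun k hk => by_contra fun h => hk (hv k h)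
  exact (Set.ncard_le_ncard hsub S.finite_toSet).trans ((Set.ncard_coe_finset S).trans_le hS)

/-- The deviation `n⁻¹XᵀX − I` of the empirical Gram matrix from the identity; it is the operator
through which the gradient differs from its value for an orthonormal design. -/
def gramDefect {n p : ℕ} (X : Matrix (Fin n) (Fin p) ℝ) : Matrix (Fin p) (Fin p) ℝ :=
  (n : ℝ)⁻¹ • (Xᵀ * X) - 1

lemma dotProduct_gramDefect_mulVec {n p : ℕ} (X : Matrix (Fin n) (Fin p) ℝ) (u v : Fin p → ℝ) :
    u ⬝ᵥ gramDefect X *ᵥ v = (n : ℝ)⁻¹ * (X *ᵥ u ⬝ᵥ X *ᵥ v) - u ⬝ᵥ v := by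
  rw [gramDefect, sub_mulVec, one_mulVec, dotProduct_sub, smul_mulVec, dotProduct_smul,
    smul_eq_mul, ← mulVec_mulVec, dotProduct_mulVec u, vecMul_transpose]

namespace RIP

variable {n p s : ℕ} {X : Matrix (Fin n) (Fin p) ℝ} {δ : ℝ}

lemma abs_dotProduct_gramDefect_self_le (hX : RIP X s δ) {v : Fin p → ℝ} (hv : Sparse s v) :
    |v ⬝ᵥ gramDefect X *ᵥ v| ≤ δ * (v ⬝ᵥ v) := by
  have h := hX v hv
  rw [nrm2_sq, nrm2_sq] at h
  rw [dotProduct_gramDefect_mulVec, abs_le]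
  constructor <;> linarith

-- Polarization, applied to `‖v‖u ± ‖u‖v` so that the two squared norms balance.
lemma abs_dotProduct_gramDefect_le (hX : RIP X s δ) {S : Finset (Fin p)} (hS : S.card ≤ s)
    {u v : Fin p → ℝ} (hu : ∀ k ∉ S, u k = 0) (hv : ∀ k ∉ S, v k = 0) :
    |u ⬝ᵥ gramDefect X *ᵥ v| ≤ δ * (nrm2 u * nrm2 v) := by
  rcases (nrm2_nonneg u).eq_or_lt with hu0 | hu0
  · rw [← hu0, zero_mul, mul_zero, eq_zero_of_nrm2_eq_zero hu0.symm, zero_dotProduct, abs_zero]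
  rcases (nrm2_nonneg v).eq_or_lt with hv0 | hv0
  · rw [← hv0, mul_zero, mul_zero, eq_zero_of_nrm2_eq_zero hv0.symm, mulVec_zero,
      dotProduct_zero, abs_zero]
  have quadratic (a b : ℝ) := hX.abs_dotProduct_gramDefect_self_le (v := a • u + b • v)
    (sparse_of_eq_zero_off hS fun k hk => by simp [hu k hk, hv k hk])
  have symm : v ⬝ᵥ gramDefect X *ᵥ u = u ⬝ᵥ gramDefect X *ᵥ v := by
    rw [dotProduct_gramDefect_mulVec, dotProduct_gramDefect_mulVec, dotProduct_comm v u,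
      dotProduct_comm (X *ᵥ v)]
  simp only [mulVec_add, mulVec_smul, add_dotProduct, dotProduct_add, smul_dotProduct,
    dotProduct_smul, smul_eq_mul, symm, dotProduct_comm v u, ← nrm2_sq] at quadratic
  have hplus := abs_le.1 (quadratic (nrm2 v) (nrm2 u))
  have hminus := abs_le.1 (quadratic (nrm2 v) (-nrm2 u))
  have hpos : 0 < 4 * (nrm2 u * nrm2 v) := by positivity
  rw [abs_le]
  constructor
  · refine le_of_mul_le_mul_left ?_ hpos
    linarith
  · refine le_of_mul_le_mul_left ?_ hpos
    linarith

lemma abs_gramDefect_mulVec_le (hX : RIP X (s + 1) δ) {S : Finset (Fin p)} (hS : S.card ≤ s)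
    {v : Fin p → ℝ} (hv : ∀ k ∉ S, v k = 0) (j : Fin p) :
    |(gramDefect X *ᵥ v) j| ≤ δ * nrm2 v := by
  have h := hX.abs_dotProduct_gramDefect_le (S := insert j S) (u := Pi.single j 1) (v := v)
    ((Finset.card_insert_le j S).trans (by omega))
    (fun k hk => Pi.single_eq_of_ne (by rintro rfl; exact hk (Finset.mem_insert_self _ _)) 1)
    (fun k hk => hv k fun h => hk (Finset.mem_insert_of_mem h))
  rwa [single_one_dotProduct, nrm2_single_one, one_mul] at h

lemma abs_gramDefect_apply_le (hX : RIP X (s + 1) δ) (hs : 1 ≤ s) (j k : Fin p) :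
    |gramDefect X j k| ≤ δ := by
  have h := hX.abs_gramDefect_mulVec_le (S := {k}) (v := Pi.single k 1) (by simpa using hs)
    (fun i hi => Pi.single_eq_of_ne (by simpa using hi) 1) j
  rwa [mulVec_single_one, nrm2_single_one, mul_one] at h

lemma abs_gramDefect_mulVec_le_of_tail (hX : RIP X (s + 1) δ) (hs : 1 ≤ s) (hδ : 0 ≤ δ)
    {S : Finset (Fin p)} (hS : S.card ≤ s) {v : Fin p → ℝ} {M Q : ℝ} (hM : 0 ≤ M)
    (hvM : ∀ k ∈ S, |v k| ≤ M) (hvQ : ∑ k ∈ Sᶜ, |v k| ≤ Q) (j : Fin p) :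
    |(gramDefect X *ᵥ v) j| ≤ δ * √s * M + δ * Q := by
  set head : Fin p → ℝ := fun k => if k ∈ S then v k else 0 with head_def
  have hsplit : (gramDefect X *ᵥ v) j =
      (gramDefect X *ᵥ head) j + ∑ k ∈ Sᶜ, gramDefect X j k * v k := by
    simp only [mulVec, dotProduct, head_def, mul_ite, mul_zero, Finset.sum_ite_mem,
      Finset.univ_inter, Finset.sum_add_sum_compl]
  have hhead : |(gramDefect X *ᵥ head) j| ≤ δ * (√s * M) := by
    have hnorm : nrm2 head ≤ √(S.card) * M :=
      nrm2_le_sqrt_card_mul hM (fun k hk => by simpa [head_def, hk] using hvM k hk)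
        (fun k hk => by simp [head_def, hk])
    refine (hX.abs_gramDefect_mulVec_le hS (fun k hk => by simp [head_def, hk]) j).trans ?_
    exact mul_le_mul_of_nonneg_left (hnorm.trans (by gcongr)) hδ
  have htail : |∑ k ∈ Sᶜ, gramDefect X j k * v k| ≤ δ * Q :=
    calc |∑ k ∈ Sᶜ, gramDefect X j k * v k| ≤ ∑ k ∈ Sᶜ, |gramDefect X j k * v k| :=
          Finset.abs_sum_le_sum_abs _ _
      _ ≤ ∑ k ∈ Sᶜ, δ * |v k| := Finset.sum_le_sum fun k _ => by
          rw [abs_mul]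
          exact mul_le_mul_of_nonneg_right (hX.abs_gramDefect_apply_le hs j k) (abs_nonneg _)
      _ ≤ δ * Q := by
          rw [← Finset.mul_sum]
          exact mul_le_mul_of_nonneg_left hvQ hδ
  rw [hsplit]
  linarith [abs_add_le ((gramDefect X *ᵥ head) j) (∑ k ∈ Sᶜ, gramDefect X j k * v k)]

lemma sum_sq_col_le (hX : RIP X (s + 1) δ) (hs : 1 ≤ s) (hδ : δ ≤ 1) (j : Fin p) :
    ∑ i, ((n : ℝ)⁻¹ * X i j) ^ 2 ≤ 2 / n := by
  have hdiag : gramDefect X j j = (n : ℝ)⁻¹ * ∑ i, X i j ^ 2 - 1 := by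
    simp [gramDefect, mul_apply, sq]
  have hcol : (n : ℝ)⁻¹ * ∑ i, X i j ^ 2 ≤ 2 := by
    linarith [(abs_le.1 (hX.abs_gramDefect_apply_le hs j j)).2]
  calc ∑ i, ((n : ℝ)⁻¹ * X i j) ^ 2 = (n : ℝ)⁻¹ * ((n : ℝ)⁻¹ * ∑ i, X i j ^ 2) := by
        simp only [mul_pow, ← Finset.mul_sum]
        ring
    _ ≤ (n : ℝ)⁻¹ * 2 := by gcongr
    _ = 2 / n := by ring

end RIP

lemma gradTerm_eq_gramDefect {n p : ℕ} (X : Matrix (Fin n) (Fin p) ℝ) (βs β : Fin p → ℝ)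
    (w : Fin n → ℝ) :
    gradTerm X (X *ᵥ βs + w) β =
      (β - βs) + gramDefect X *ᵥ (β - βs) - (n : ℝ)⁻¹ • Xᵀ *ᵥ w := by
  rw [gradTerm, gramDefect, sub_mulVec, one_mulVec, smul_mulVec, ← mulVec_mulVec,
    ← sub_sub, ← mulVec_sub, mulVec_sub Xᵀ, smul_sub]
  abel

/-! ### Order statistics -/

lemma getD_le_of_countP_le {α : Type*} [LinearOrder α] {l : List α} (hl : l.Pairwise (· ≥ ·))
    {x d : α} (hd : d ≤ x) {k : ℕ} (hk : l.countP (x < ·) ≤ k) : l.getD k d ≤ x := by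
  induction l generalizing k with
  | nil => simpa using hd
  | cons a l ih =>
    obtain ⟨hla, hl⟩ := List.pairwise_cons.1 hl
    cases k with
    | zero => simpa using (List.countP_eq_zero.1 (Nat.le_zero.1 hk)) a List.mem_cons_self
    | succ k =>
      rw [List.getD_cons_succ]
      refine ih hl ?_
      by_cases hxa : x < a
      · rw [List.countP_cons_of_pos (by simpa using hxa)] at hk
        omega
      · have hcount : l.countP (x < ·) = 0 :=
          List.countP_eq_zero.2 fun b hb => by simpa using (hla b hb).trans (not_lt.1 hxa)
        omega

lemma countP_ofFn_eq_ncard {α : Type*} {p : ℕ} (f : Fin p → α) (P : α → Prop) [DecidablePred P] :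
    (List.ofFn f).countP (P ·) = {j | P (f j)}.ncard := by
  rw [Set.ncard_eq_toFinset_card', Set.toFinset_ofPred, List.ofFn_eq_map, List.countP_map,
    List.countP_eq_length_filter]
  rfl

lemma theta_le_of_ncard_le {p k : ℕ} {v : Fin p → ℝ} {x : ℝ} (hx : 0 ≤ x)
    (h : {j | x < |v j|}.ncard ≤ k - 1) : theta k v ≤ x := by
  refine getD_le_of_countP_le (List.pairwise_insertionSort _ _) hx ?_
  rwa [(List.perm_insertionSort _ _).countP_eq, countP_ofFn_eq_ncard _ (x < ·)]

lemma theta_le_of_forall_abs_le {p k : ℕ} {v : Fin p → ℝ} {x : ℝ} (hx : 0 ≤ x)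
    (h : ∀ j, |v j| ≤ x) : theta k v ≤ x := by
  refine theta_le_of_ncard_le hx ?_
  simp [fun j => not_lt.2 (h j)]

lemma abs_le_nrmInf {p : ℕ} (v : Fin p → ℝ) (j : Fin p) : |v j| ≤ nrmInf v :=
  le_ciSup (f := fun j => |v j|) (Set.finite_range _).bddAbove j

lemma nrmInf_nonneg {p : ℕ} (v : Fin p → ℝ) : 0 ≤ nrmInf v :=
  Real.iSup_nonneg fun _ => abs_nonneg _

lemma theta_le_nrmInf {p : ℕ} (k : ℕ) (v : Fin p → ℝ) : theta k v ≤ nrmInf v :=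
  theta_le_of_forall_abs_le (nrmInf_nonneg v) (abs_le_nrmInf v)

/-! ### Gaussian concentration -/

section Concentration

variable {Ω ι : Type*} {mΩ : MeasurableSpace Ω} {μ : Measure Ω}

lemma hasSubgaussianMGF_mono {Y : Ω → ℝ} {c c' : NNReal} (hY : HasSubgaussianMGF Y c μ)
    (hcc' : c ≤ c') : HasSubgaussianMGF Y c' μ where
  integrable_exp_mul := hY.integrable_exp_mul
  mgf_le t := (hY.mgf_le t).trans (by gcongr)

lemma one_sub_le_measureReal_forall_abs_le [Fintype ι] [IsProbabilityMeasure μ]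
    {Y : ι → Ω → ℝ} {c : NNReal} (hY : ∀ j, HasSubgaussianMGF (Y j) c μ) {ε : ℝ} (hε : 0 ≤ ε) :
    1 - 2 * Fintype.card ι * Real.exp (-ε ^ 2 / (2 * c)) ≤ μ.real {ω | ∀ j, |Y j ω| ≤ ε} := by
  set good := {ω | ∀ j, |Y j ω| ≤ ε}
  have hcover : goodᶜ ⊆ ⋃ j, ({ω | ε ≤ Y j ω} ∪ {ω | ε ≤ (-Y j) ω}) := by
    intro ω hω
    simp only [good, Set.mem_compl_iff, Set.mem_ofPred_eq, not_forall, not_le] at hω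
    obtain ⟨j, hj⟩ := hω
    exact Set.mem_iUnion.2 ⟨j, (lt_abs.1 hj).imp le_of_lt le_of_lt⟩
  have htail (j : ι) : μ.real ({ω | ε ≤ Y j ω} ∪ {ω | ε ≤ (-Y j) ω}) ≤
      2 * Real.exp (-ε ^ 2 / (2 * c)) := by
    linarith [measureReal_union_le (μ := μ) {ω | ε ≤ Y j ω} {ω | ε ≤ (-Y j) ω},
      (hY j).measure_ge_le hε, (hY j).neg.measure_ge_le hε]
  have hbad : μ.real goodᶜ ≤ 2 * Fintype.card ι * Real.exp (-ε ^ 2 / (2 * c)) :=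
    calc μ.real goodᶜ ≤ ∑ j, μ.real ({ω | ε ≤ Y j ω} ∪ {ω | ε ≤ (-Y j) ω}) :=
          (measureReal_mono hcover).trans (measureReal_iUnion_fintype_le _)
      _ ≤ ∑ _j : ι, 2 * Real.exp (-ε ^ 2 / (2 * c)) := Finset.sum_le_sum fun j _ => htail j
      _ = 2 * Fintype.card ι * Real.exp (-ε ^ 2 / (2 * c)) := by
          rw [Finset.sum_const, Finset.card_univ, nsmul_eq_mul]
          ring
  have hcompl : (1 : ℝ) ≤ μ.real good + μ.real goodᶜ := by
    simpa using measureReal_union_le (μ := μ) good goodᶜ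
  linarith

lemma hasSubgaussianMGF_id_gaussianReal (v : NNReal) :
    HasSubgaussianMGF id v (gaussianReal 0 v) where
  integrable_exp_mul := integrable_exp_mul_gaussianReal
  mgf_le t := by
    rw [mgf_gaussianReal (μ := 0) (v := v) (by simp)]
    simp

end Concentration

instance isProbabilityMeasure_noiseMeasure (n : ℕ) (σ : ℝ) :
    IsProbabilityMeasure (noiseMeasure n σ) := by
  unfold noiseMeasure
  infer_instance

lemma hasSubgaussianMGF_eval_noiseMeasure {n : ℕ} (σ : ℝ) (i : Fin n) :
    HasSubgaussianMGF (fun w : Fin n → ℝ => w i) (σ ^ 2).toNNReal (noiseMeasure n σ) := by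
  have heval := measurePreserving_eval (fun _ : Fin n => gaussianReal 0 (σ ^ 2).toNNReal) i
  refine HasSubgaussianMGF.of_map (X := id) heval.measurable.aemeasurable ?_
  rw [noiseMeasure, heval.map_eq]
  exact hasSubgaussianMGF_id_gaussianReal _

lemma hasSubgaussianMGF_sum_mul_noiseMeasure {n : ℕ} (σ : ℝ) (a : Fin n → ℝ) :
    HasSubgaussianMGF (fun w => ∑ i, a i * w i) ((∑ i, a i ^ 2) * σ ^ 2).toNNReal
      (noiseMeasure n σ) := by
  have hindep : iIndepFun (fun (i : Fin n) (w : Fin n → ℝ) => a i * w i) (noiseMeasure n σ) :=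
    iIndepFun_pi (X := fun i (x : ℝ) => a i * x) (fun i => by fun_prop)
  convert HasSubgaussianMGF.sum_of_iIndepFun hindep (s := Finset.univ)
    (fun i _ => (hasSubgaussianMGF_eval_noiseMeasure σ i).const_mul (a i)) using 1
  ext
  rw [Real.coe_toNNReal _ (by positivity), Finset.sum_mul, NNReal.coe_sum]
  exact Finset.sum_congr rfl fun i _ => by
    change a i ^ 2 * σ ^ 2 = a i ^ 2 * ((σ ^ 2).toNNReal : ℝ)
    rw [Real.coe_toNNReal _ (sq_nonneg σ)]

/-- The noise level `ρ = σ√((log p)/n)` of a single coordinate of the gradient. -/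
def noiseLevel (n p : ℕ) (σ : ℝ) : ℝ := σ * √(Real.log p / n)

lemma one_sub_inv_le_noiseMeasure_abs_sum_le {n p : ℕ} {σ : ℝ} (hρ : 0 < noiseLevel n p σ)
    {a : Fin p → Fin n → ℝ} (ha : ∀ j, ∑ i, a j i ^ 2 ≤ 2 / n) :
    1 - (p : ℝ)⁻¹ ≤
      (noiseMeasure n σ).real {w | ∀ j, |∑ i, a j i * w i| ≤ 4 * noiseLevel n p σ} := by
  have hlog : 0 < Real.log p / n := by
    by_contra! h
    simp [noiseLevel, Real.sqrt_eq_zero_of_nonpos h] at hρ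
  have hσ : 0 < σ := pos_of_mul_pos_left hρ (Real.sqrt_nonneg _)
  have hn : (0 : ℝ) < n := lt_of_le_of_ne n.cast_nonneg fun h => by simp [← h] at hlog
  have hp : 2 ≤ p := by
    by_contra! h
    interval_cases p <;> simp at hlog
  have hp' : (2 : ℝ) ≤ p := by exact_mod_cast hp
  have hsub (j : Fin p) : HasSubgaussianMGF (fun w => ∑ i, a j i * w i) (2 / n * σ ^ 2).toNNReal
      (noiseMeasure n σ) :=
    hasSubgaussianMGF_mono (hasSubgaussianMGF_sum_mul_noiseMeasure σ (a j))
      (Real.toNNReal_le_toNNReal (mul_le_mul_of_nonneg_right (ha j) (sq_nonneg σ)))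
  have hexponent : -(4 * noiseLevel n p σ) ^ 2 / (2 * (2 / n * σ ^ 2)) = -(4 * Real.log p) := by
    rw [noiseLevel, mul_pow, mul_pow, Real.sq_sqrt hlog.le]
    field_simp
    ring
  have hexp : Real.exp (-(4 * Real.log p)) = ((p : ℝ) ^ 4)⁻¹ := by
    rw [Real.exp_neg, ← Real.exp_log (show (0 : ℝ) < p ^ 4 by positivity), Real.log_pow]
    norm_num
  have hunion := one_sub_le_measureReal_forall_abs_le hsub (mul_nonneg zero_le_four hρ.le)
  rw [Real.coe_toNNReal _ (by positivity), hexponent, hexp, Fintype.card_fin] at hunion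
  have hsmall : 2 * (p : ℝ) * ((p : ℝ) ^ 4)⁻¹ ≤ (p : ℝ)⁻¹ := by
    field_simp
    nlinarith
  linarith

/-! ### Scalar recursions -/

lemma abs_le_mul_exp_sum {x d D : ℕ → ℝ} {t : ℕ} (hx : ∀ u < t, x (u + 1) = x u * (1 + d u))
    (hd : ∀ u < t, |d u| ≤ D u) : |x t| ≤ |x 0| * Real.exp (∑ u ∈ Finset.range t, D u) := by
  induction t with
  | zero => simp
  | succ t ih =>
    have hfactor : |1 + d t| ≤ Real.exp (D t) :=
      calc |1 + d t| ≤ 1 + |d t| := (abs_add_le _ _).trans_eq (by rw [abs_one])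
        _ ≤ D t + 1 := by linarith [hd t t.lt_succ_self]
        _ ≤ Real.exp (D t) := Real.add_one_le_exp _
    rw [hx t t.lt_succ_self, abs_mul, Finset.sum_range_succ, Real.exp_add, ← mul_assoc]
    have hprev := ih (fun u hu => hx u (hu.trans t.lt_succ_self))
      fun u hu => hd u (hu.trans t.lt_succ_self)
    gcongr

lemma sum_range_pow_tsub_le {x : ℝ} (hx0 : 0 ≤ x) (hx1 : x < 1) (T t : ℕ) :
    ∑ u ∈ Finset.range t, x ^ (u - T) ≤ T + (1 - x)⁻¹ :=
  calc ∑ u ∈ Finset.range t, x ^ (u - T) ≤ ∑ u ∈ Finset.range (T + t), x ^ (u - T) :=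
        Finset.sum_le_sum_of_subset_of_nonneg (Finset.range_subset_range.2 (Nat.le_add_left t T))
          fun _ _ _ => pow_nonneg hx0 _
    _ = T + ∑ u ∈ Finset.range t, x ^ u := by
        rw [Finset.sum_range_add]
        congr 1
        · rw [Finset.sum_congr rfl fun u hu => by
            rw [Nat.sub_eq_zero_of_le (Finset.mem_range.1 hu).le, pow_zero]]
          simp
        · simp only [Nat.add_sub_cancel_left]
    _ ≤ T + (1 - x)⁻¹ := by
        gcongr
        exact (summable_geometric_of_lt_one hx0 hx1).sum_le_tsum _ (fun _ _ => pow_nonneg hx0 _)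
          |>.trans_eq (tsum_geometric_of_lt_one hx0 hx1)

lemma one_le_mul_one_add_pow {α x : ℝ} (hα : 0 < α) (hx0 : 0 ≤ x) (hx2 : x ≤ 2) {u : ℕ}
    (hu : -Real.log α ≤ u * (x / 2)) : 1 ≤ α * (1 + x) ^ u := by
  have hlog : x / 2 ≤ Real.log (1 + x) := by
    refine le_trans ?_ (Real.le_log_one_add_of_nonneg hx0)
    rw [div_le_div_iff₀ two_pos (by linarith)]
    nlinarith
  rw [← Real.log_nonneg_iff (by positivity), Real.log_mul hα.ne' (by positivity), Real.log_pow]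
  linarith [mul_le_mul_of_nonneg_left hlog u.cast_nonneg]

lemma abs_mul_le_sq_of_abs_add_sub_le {x y c : ℝ} (hadd : |x + y| ≤ 2 * c)
    (hsub : |x - y| ≤ 2 * c) : |x * y| ≤ c ^ 2 := by
  have hadd_sq := sq_le_sq' (abs_le.1 hadd).1 (abs_le.1 hadd).2
  have hsub_sq := sq_le_sq' (abs_le.1 hsub).1 (abs_le.1 hsub).2
  exact abs_le.2 ⟨by linarith [sq_nonneg (x + y)], by linarith [sq_nonneg (x - y)]⟩

/-! ### One gradient step on a strong coordinate -/

/-- The entry `g·l` of the estimator in the diagonalizing coordinates `a = g + l`, `b = g - l`. -/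
def signal (a b : ℝ) : ℝ := (a ^ 2 - b ^ 2) / 4

/-- The squared length `g² + l²` in the coordinates `a = g + l`, `b = g - l`; the speed of the
gradient flow of `signal`. -/
def energy (a b : ℝ) : ℝ := (a ^ 2 + b ^ 2) / 2

lemma signal_step (a b x : ℝ) :
    signal (a * (1 + x)) (b * (1 - x)) = signal a b * (1 + x ^ 2) + energy a b * x := by
  unfold signal energy
  ring

lemma energy_nonneg (a b : ℝ) : 0 ≤ energy a b := by
  unfold energy
  positivity

lemma two_mul_signal_le_energy (a b : ℝ) : 2 * signal a b ≤ energy a b := by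
  unfold signal energy
  linarith [sq_nonneg b]

/-- The state of a strong coordinate with target `B > 0`: both diagonal coordinates are positive,
their product has not grown beyond `A`, and the signal lies in `[0, 2B]`. -/
structure TrackingPair (A B a b : ℝ) : Prop where
  pos_left : 0 < a
  pos_right : 0 < b
  mul_le : a * b ≤ A
  abs_signal_sub_le : |signal a b - B| ≤ B

/-- `q` is the negative gradient seen by the pair `(a, b)`, up to an error `E` that is small
compared with the lower bound `m` on the target `B`; `η` is the step size. -/
structure NoisyGradient (η m B E a b q : ℝ) : Prop where
  η_pos : 0 < η
  η_le : η ≤ 1 / 100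
  m_pos : 0 < m
  m_le : m ≤ B
  target_le_one : B ≤ 1
  err_le : E ≤ m / 8
  abs_sub_le : |q - (B - signal a b)| ≤ E

/-- The rate at which one gradient step contracts the signal towards its target. The factor
`15/16` leaves room for the second-order term of the step. -/
def contractionRate (η a b : ℝ) : ℝ := 15 / 16 * (η * energy a b)

lemma NoisyGradient.abs_le {η m B E a b q : ℝ} (hq : NoisyGradient η m B E a b q) :
    |q| ≤ |signal a b - B| + E := by
  have hsplit := abs_add_le (q - (B - signal a b)) (B - signal a b)
  rw [sub_add_cancel, abs_sub_comm B] at hsplit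
  linarith [hq.abs_sub_le]

lemma contractionRate_nonneg {η : ℝ} (hη : 0 ≤ η) (a b : ℝ) : 0 ≤ contractionRate η a b :=
  mul_nonneg (by norm_num) (mul_nonneg hη (energy_nonneg a b))

lemma mul_sq_div_four_le_contractionRate {η : ℝ} (hη : 0 ≤ η) (a b : ℝ) :
    η * a ^ 2 / 4 ≤ contractionRate η a b := by
  unfold contractionRate energy
  linarith [mul_nonneg hη (sq_nonneg a), mul_nonneg hη (sq_nonneg b)]

namespace TrackingPair

variable {η m A B E a b q : ℝ}

lemma signal_nonneg (h : TrackingPair A B a b) : 0 ≤ signal a b := by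
  linarith [(abs_le.1 h.abs_signal_sub_le).1]

lemma energy_le (h : TrackingPair A B a b) : energy a b ≤ 2 * signal a b + A := by
  have hba : b ≤ a := by
    refine (sq_le_sq₀ h.pos_right.le h.pos_left.le).1 ?_
    have hsignal := h.signal_nonneg
    unfold signal at hsignal
    linarith
  have hbb : b * b ≤ a * b := mul_le_mul_of_nonneg_right hba h.pos_right.le
  unfold signal energy
  linarith [h.mul_le]

lemma mul_energy_le_one (h : TrackingPair A B a b) (hq : NoisyGradient η m B E a b q)
    (hA : A ≤ 1) : η * energy a b ≤ 1 := by
  have hbound : energy a b ≤ 5 := by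
    linarith [h.energy_le, (abs_le.1 h.abs_signal_sub_le).2, hq.target_le_one]
  nlinarith [hq.η_pos, hq.η_le]

lemma contractionRate_le_one (h : TrackingPair A B a b) (hq : NoisyGradient η m B E a b q)
    (hA : A ≤ 1) : contractionRate η a b ≤ 1 := by
  unfold contractionRate
  linarith [h.mul_energy_le_one hq hA]

lemma abs_mul_gradient_le (h : TrackingPair A B a b) (hq : NoisyGradient η m B E a b q) :
    |η * q| ≤ 1 / 50 := by
  have hq_le : |q| ≤ 9 / 8 := by
    linarith [hq.abs_le, h.abs_signal_sub_le, hq.err_le, hq.m_le, hq.target_le_one]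
  rw [abs_mul, abs_of_pos hq.η_pos]
  nlinarith [hq.η_pos, hq.η_le, abs_nonneg q]

lemma signal_mul_sq_le (h : TrackingPair A B a b) (hq : NoisyGradient η m B E a b q) :
    signal a b * (η * q) ^ 2 ≤ η * energy a b * ((|signal a b - B| + E) / 16) := by
  have hsq : (η * q) ^ 2 ≤ η * ((|signal a b - B| + E) / 8) :=
    calc (η * q) ^ 2 = |η * q| * (η * |q|) := by
          rw [← sq_abs, sq, abs_mul η q, abs_of_pos hq.η_pos]
      _ ≤ 1 / 8 * (η * (|signal a b - B| + E)) := by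
          have := hq.η_pos
          gcongr
          · linarith [h.abs_mul_gradient_le hq]
          · exact hq.abs_le
      _ = η * ((|signal a b - B| + E) / 8) := by ring
  calc signal a b * (η * q) ^ 2 ≤ energy a b / 2 * (η * ((|signal a b - B| + E) / 8)) := by
        have := energy_nonneg a b
        gcongr
        linarith [two_mul_signal_le_energy a b]
    _ = η * energy a b * ((|signal a b - B| + E) / 16) := by ring

lemma abs_signal_step_sub_le (h : TrackingPair A B a b) (hq : NoisyGradient η m B E a b q)
    (hA : A ≤ 1) :
    |signal (a * (1 + η * q)) (b * (1 - η * q)) - B| ≤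
      (1 - contractionRate η a b) * |signal a b - B| + contractionRate η a b * (2 * E) := by
  have hlin : 0 ≤ η * energy a b := mul_nonneg hq.η_pos.le (energy_nonneg a b)
  have hexpand : signal (a * (1 + η * q)) (b * (1 - η * q)) - B =
      (1 - η * energy a b) * (signal a b - B) + η * energy a b * (q - (B - signal a b)) +
        signal a b * (η * q) ^ 2 := by
    rw [signal_step]
    ring
  have hfirst : |(1 - η * energy a b) * (signal a b - B)| =
      (1 - η * energy a b) * |signal a b - B| := by
    rw [abs_mul, abs_of_nonneg (sub_nonneg.2 (h.mul_energy_le_one hq hA))]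
  have hnoise : |η * energy a b * (q - (B - signal a b))| ≤ η * energy a b * E := by
    rw [abs_mul, abs_of_nonneg hlin]
    exact mul_le_mul_of_nonneg_left hq.abs_sub_le hlin
  have hsecond : |signal a b * (η * q) ^ 2| ≤
      η * energy a b * ((|signal a b - B| + E) / 16) := by
    rw [abs_of_nonneg (mul_nonneg h.signal_nonneg (sq_nonneg _))]
    exact h.signal_mul_sq_le hq
  have hE : 0 ≤ η * energy a b * E := (abs_nonneg _).trans hnoise
  rw [hexpand, contractionRate]
  refine (abs_add_three _ _ _).trans ?_
  linarith

protected lemma step (h : TrackingPair A B a b) (hq : NoisyGradient η m B E a b q)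
    (hA : A ≤ 1) : TrackingPair A B (a * (1 + η * q)) (b * (1 - η * q)) := by
  have hηq := abs_le.1 (h.abs_mul_gradient_le hq)
  refine ⟨mul_pos h.pos_left (by linarith), mul_pos h.pos_right (by linarith), ?_, ?_⟩
  · calc a * (1 + η * q) * (b * (1 - η * q)) = a * b - a * b * (η * q) ^ 2 := by ring
      _ ≤ a * b := sub_le_self _ (mul_nonneg (mul_pos h.pos_left h.pos_right).le (sq_nonneg _))
      _ ≤ A := h.mul_le
  · have hrate_nonneg := contractionRate_nonneg hq.η_pos.le a b
    have hrate_le : 0 ≤ 1 - contractionRate η a b := sub_nonneg.2 (h.contractionRate_le_one hq hA)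
    have hEB : 2 * E ≤ B := by linarith [hq.err_le, hq.m_le, hq.m_pos]
    refine (h.abs_signal_step_sub_le hq hA).trans ?_
    linarith [mul_le_mul_of_nonneg_left h.abs_signal_sub_le hrate_le,
      mul_le_mul_of_nonneg_left hEB hrate_nonneg]

lemma le_sq_step (h : TrackingPair A B a b) (hq : NoisyGradient η m B E a b q)
    (hma : m ≤ a ^ 2) : m ≤ (a * (1 + η * q)) ^ 2 := by
  have hηq := abs_le.1 (h.abs_mul_gradient_le hq)
  rcases le_total (signal a b) (m / 2) with hlow | hhigh
  · have hq_nonneg : 0 ≤ q := by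
      linarith [(abs_le.1 hq.abs_sub_le).1, hq.err_le, hq.m_le, hq.m_pos]
    have hle : a ≤ a * (1 + η * q) :=
      le_mul_of_one_le_right h.pos_left.le (by linarith [mul_nonneg hq.η_pos.le hq_nonneg])
    exact hma.trans (pow_le_pow_left₀ h.pos_left.le hle 2)
  · have hbig : 2 * m ≤ a ^ 2 := by
      unfold signal at hhigh
      linarith [sq_nonneg b]
    rw [mul_pow]
    nlinarith [sq_nonneg (η * q), hq.m_pos]

lemma mul_growth_le_step (h : TrackingPair A B a b) (hq : NoisyGradient η m B E a b q)
    (hma : a ^ 2 < m) : a * (1 + η * m / 2) ≤ a * (1 + η * q) := by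
  have hsignal : signal a b ≤ m / 4 := by
    unfold signal
    linarith [sq_nonneg b]
  have hq_ge : m / 2 ≤ q := by
    linarith [(abs_le.1 hq.abs_sub_le).1, hq.err_le, hq.m_le, hq.m_pos]
  refine mul_le_mul_of_nonneg_left ?_ h.pos_left.le
  linarith [mul_le_mul_of_nonneg_left hq_ge hq.η_pos.le]

lemma div_eight_le_signal (h : TrackingPair A B a b) (hm : 0 < m) (hA : A ≤ m / 2)
    (hma : m ≤ a ^ 2) : m / 8 ≤ signal a b := by
  have hb : b ^ 2 ≤ m / 4 := by
    have hprod : m * b ^ 2 ≤ m * (m / 4) :=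
      calc m * b ^ 2 ≤ a ^ 2 * b ^ 2 := mul_le_mul_of_nonneg_right hma (sq_nonneg b)
        _ = (a * b) ^ 2 := (mul_pow a b 2).symm
        _ ≤ (m / 2) ^ 2 := pow_le_pow_left₀ (mul_pos h.pos_left h.pos_right).le
            (h.mul_le.trans hA) 2
        _ = m * (m / 4) := by ring
    exact le_of_mul_le_mul_left hprod hm
  unfold signal
  linarith

end TrackingPair

/-! ### The scales of the descent -/

/-- The parameters on which the coordinatewise analysis of the descent depends: step size `η`,
initialization `α`, bounds `m ≤ N` on the strong signals, logarithmic factor `L`, restricted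
isometry defect `θ = δ√s`, and noise level `ρ`. -/
structure DescentScales where
  (η α m N L θ ρ : ℝ)
  η_pos : 0 < η
  η_le : η ≤ 1 / 100
  α_pos : 0 < α
  α_sq_le : α ^ 2 ≤ ρ
  m_pos : 0 < m
  m_le_N : m ≤ N
  N_le_one : N ≤ 1
  one_le_L : 1 ≤ L
  neg_log_α_le : -Real.log α ≤ L
  noise_le : 400 * L * ρ ≤ m
  θ_le : θ ≤ 1 / 100
  θ_mul_N_le : θ * N ≤ m / (100 * L)

namespace DescentScales

variable (P : DescentScales)

/-- The number of steps after which every strong coordinate has left the small initialization. -/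
def warmup : ℕ := ⌈4 * P.L / (P.η * P.m)⌉₊

/-- The factor by which the error on the strong coordinates has decayed at time `t`: none before
`warmup` (the subtraction truncates), geometric afterwards. -/
def weight (t : ℕ) : ℝ := (1 - P.η * P.m / 8) ^ (t - P.warmup)

/-- The bound at time `t` on the distance between a coordinate of the gradient and its value for
an orthonormal noiseless design. -/
def gradErr (t : ℕ) : ℝ := P.m / (100 * P.L) * P.weight t + 6 * P.ρ

lemma L_pos : 0 < P.L := one_pos.trans_le P.one_le_L

lemma ρ_pos : 0 < P.ρ := (pow_pos P.α_pos 2).trans_le P.α_sq_le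

lemma N_pos : 0 < P.N := P.m_pos.trans_le P.m_le_N

lemma ρ_le : 400 * P.ρ ≤ P.m := by
  nlinarith [P.noise_le, P.one_le_L, P.ρ_pos]

lemma α_sq_le_half_m : P.α ^ 2 ≤ P.m / 2 := by
  linarith [P.α_sq_le, P.ρ_le, P.ρ_pos]

lemma α_sq_le_one : P.α ^ 2 ≤ 1 := by
  linarith [P.α_sq_le, P.ρ_le, P.ρ_pos, P.m_le_N, P.N_le_one]

lemma ηm_pos : 0 < P.η * P.m := mul_pos P.η_pos P.m_pos

lemma ηm_le : P.η * P.m ≤ 1 / 100 :=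
  (mul_le_of_le_one_right P.η_pos.le (P.m_le_N.trans P.N_le_one)).trans P.η_le

lemma weight_nonneg (t : ℕ) : 0 ≤ P.weight t := pow_nonneg (by linarith [P.ηm_le]) _

lemma weight_le_one (t : ℕ) : P.weight t ≤ 1 :=
  pow_le_one₀ (by linarith [P.ηm_le]) (by linarith [P.ηm_pos])

lemma weight_eq_one {t : ℕ} (ht : t ≤ P.warmup) : P.weight t = 1 := by
  rw [weight, Nat.sub_eq_zero_of_le ht, pow_zero]

lemma weight_succ {t : ℕ} (ht : P.warmup ≤ t) :
    P.weight (t + 1) = P.weight t * (1 - P.η * P.m / 8) := by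
  rw [weight, weight, Nat.sub_add_comm ht, pow_succ]

lemma ηm_mul_warmup_le : P.η * P.m * P.warmup ≤ 4 * P.L + 1 := by
  have hceil : (P.warmup : ℝ) < 4 * P.L / (P.η * P.m) + 1 :=
    Nat.ceil_lt_add_one (div_nonneg (by linarith [P.L_pos]) P.ηm_pos.le)
  calc P.η * P.m * P.warmup ≤ P.η * P.m * (4 * P.L / (P.η * P.m) + 1) :=
        mul_le_mul_of_nonneg_left hceil.le P.ηm_pos.le
    _ = 4 * P.L + P.η * P.m := by rw [mul_add, mul_div_cancel₀ _ P.ηm_pos.ne', mul_one]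
    _ ≤ 4 * P.L + 1 := by linarith [P.ηm_le]

lemma ηm_mul_sum_weight_le (t : ℕ) :
    P.η * P.m * ∑ u ∈ Finset.range t, P.weight u ≤ 4 * P.L + 9 := by
  have hsum := sum_range_pow_tsub_le (x := 1 - P.η * P.m / 8) (by linarith [P.ηm_le])
    (by linarith [P.ηm_pos]) P.warmup t
  calc P.η * P.m * ∑ u ∈ Finset.range t, P.weight u
      ≤ P.η * P.m * (P.warmup + (1 - (1 - P.η * P.m / 8))⁻¹) :=
        mul_le_mul_of_nonneg_left hsum P.ηm_pos.le
    _ = P.η * P.m * P.warmup + 8 := by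
        rw [sub_sub_cancel, inv_div, mul_add, mul_div_cancel₀ _ P.ηm_pos.ne']
    _ ≤ 4 * P.L + 9 := by linarith [P.ηm_mul_warmup_le]

lemma one_le_growth_of_warmup_le {t : ℕ} (ht : P.warmup ≤ t) :
    1 ≤ P.α * (1 + P.η * P.m / 2) ^ t := by
  have hceil : 4 * P.L / (P.η * P.m) ≤ t := (Nat.le_ceil _).trans (Nat.cast_le.2 ht)
  rw [div_le_iff₀ P.ηm_pos] at hceil
  exact one_le_mul_one_add_pow P.α_pos (by linarith [P.ηm_pos]) (by linarith [P.ηm_le])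
    (by linarith [P.neg_log_α_le])

lemma gradErr_le (t : ℕ) : P.gradErr t ≤ P.m / 100 * P.weight t + 6 * P.ρ := by
  have hdiv : P.m / (100 * P.L) ≤ P.m / 100 :=
    div_le_div_of_nonneg_left P.m_pos.le (by norm_num) (by linarith [P.one_le_L])
  exact add_le_add_left (mul_le_mul_of_nonneg_right hdiv (P.weight_nonneg t)) _

lemma gradErr_le_div_eight (t : ℕ) : P.gradErr t ≤ P.m / 8 := by
  have hweight := mul_le_of_le_one_right (div_nonneg P.m_pos.le (by norm_num : (0 : ℝ) ≤ 100))
    (P.weight_le_one t)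
  linarith [P.gradErr_le t, P.ρ_le, P.m_pos]

lemma η_mul_sum_gradErr_le {t : ℕ} (ht : t * (P.η * P.ρ) ≤ 1 / 100) :
    ∑ u ∈ Finset.range t, P.η * (P.gradErr u + 3 * P.ρ) ≤ 1 / 2 := by
  have hdecay : P.η * P.m * ∑ u ∈ Finset.range t, P.weight u ≤ 13 / 100 * (100 * P.L) := by
    linarith [P.ηm_mul_sum_weight_le t, P.one_le_L]
  calc ∑ u ∈ Finset.range t, P.η * (P.gradErr u + 3 * P.ρ)
      = P.η * P.m * (∑ u ∈ Finset.range t, P.weight u) / (100 * P.L) +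
          9 * (t * (P.η * P.ρ)) := by
        simp only [gradErr, ← Finset.mul_sum, Finset.sum_add_distrib, Finset.sum_const,
          Finset.card_range, nsmul_eq_mul]
        ring
    _ ≤ 13 / 100 + 9 * (1 / 100) :=
        add_le_add ((div_le_iff₀ (by linarith [P.L_pos])).2 hdecay) (by linarith)
    _ ≤ 1 / 2 := by norm_num

end DescentScales

/-! ### Strong and weak coordinates along the descent -/

/-- The trajectory of the diagonal coordinates of a strong coordinate with target `B`, up to time
`T`, under negative gradients `q` whose error obeys the bound `P.gradErr`. -/
structure StrongTrajectory (P : DescentScales) (B : ℝ) (T : ℕ) (a b q : ℕ → ℝ) : Prop where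
  m_le : P.m ≤ B
  target_le : B ≤ P.N
  left_zero : a 0 = P.α
  right_zero : b 0 = P.α
  left_succ : ∀ t, a (t + 1) = a t * (1 + P.η * q t)
  right_succ : ∀ t, b (t + 1) = b t * (1 - P.η * q t)
  abs_sub_le : ∀ t < T, |q t - (B - signal (a t) (b t))| ≤ P.gradErr t

namespace StrongTrajectory

variable {P : DescentScales} {B : ℝ} {T t : ℕ} {a b q : ℕ → ℝ}

lemma noisyGradient (h : StrongTrajectory P B T a b q) (ht : t < T) :
    NoisyGradient P.η P.m B (P.gradErr t) (a t) (b t) (q t) where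
  η_pos := P.η_pos
  η_le := P.η_le
  m_pos := P.m_pos
  m_le := h.m_le
  target_le_one := h.target_le.trans P.N_le_one
  err_le := P.gradErr_le_div_eight t
  abs_sub_le := h.abs_sub_le t ht

lemma trackingPair (h : StrongTrajectory P B T a b q) (ht : t ≤ T) :
    TrackingPair (P.α ^ 2) B (a t) (b t) := by
  induction t with
  | zero =>
    rw [h.left_zero, h.right_zero]
    refine ⟨P.α_pos, P.α_pos, (sq P.α).ge, ?_⟩
    simp [signal, abs_of_pos (P.m_pos.trans_le h.m_le)]
  | succ t ih =>
    rw [h.left_succ, h.right_succ]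
    exact (ih (Nat.le_of_succ_le ht)).step (h.noisyGradient ht) P.α_sq_le_one

lemma m_le_sq_or_growth_le (h : StrongTrajectory P B T a b q) (ht : t ≤ T) :
    P.m ≤ a t ^ 2 ∨ P.α * (1 + P.η * P.m / 2) ^ t ≤ a t := by
  induction t with
  | zero => exact .inr (by rw [h.left_zero, pow_zero, mul_one])
  | succ t ih =>
    have hpair := h.trackingPair (Nat.le_of_succ_le ht)
    have hgrad := h.noisyGradient ht
    rw [h.left_succ]
    rcases le_or_gt P.m (a t ^ 2) with hlarge | hsmall
    · exact .inl (hpair.le_sq_step hgrad hlarge)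
    · refine .inr (le_trans ?_ (hpair.mul_growth_le_step hgrad hsmall))
      rw [pow_succ, ← mul_assoc]
      exact mul_le_mul_of_nonneg_right
        ((ih (Nat.le_of_succ_le ht)).resolve_left (not_le.2 hsmall)) (by linarith [P.ηm_pos])

lemma m_le_sq (h : StrongTrajectory P B T a b q) (ht : t ≤ T) (hwarm : P.warmup ≤ t) :
    P.m ≤ a t ^ 2 := by
  refine (h.m_le_sq_or_growth_le ht).elim id fun hgrowth => ?_
  have hone : 1 ≤ a t := (P.one_le_growth_of_warmup_le hwarm).trans hgrowth
  exact (P.m_le_N.trans P.N_le_one).trans (one_le_pow₀ hone)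

lemma div_eight_le_signal (h : StrongTrajectory P B T a b q) (ht : t ≤ T)
    (hwarm : P.warmup ≤ t) : P.m / 8 ≤ signal (a t) (b t) :=
  (h.trackingPair ht).div_eight_le_signal P.m_pos P.α_sq_le_half_m (h.m_le_sq ht hwarm)

lemma abs_signal_sub_le_succ_of_warmup_le (h : StrongTrajectory P B T a b q) (ht : t < T)
    (hwarm : P.warmup ≤ t) (herr : |signal (a t) (b t) - B| ≤ P.N * P.weight t + 24 * P.ρ) :
    |signal (a (t + 1)) (b (t + 1)) - B| ≤ P.N * P.weight (t + 1) + 24 * P.ρ := by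
  have hpair := h.trackingPair ht.le
  have hgrad := h.noisyGradient ht
  set x := contractionRate P.η (a t) (b t)
  have hx_ge : P.η * P.m / 4 ≤ x := by
    linarith [mul_sq_div_four_le_contractionRate P.η_pos.le (a t) (b t),
      mul_le_mul_of_nonneg_left (h.m_le_sq ht.le hwarm) P.η_pos.le]
  have hx_nonneg : 0 ≤ x := contractionRate_nonneg P.η_pos.le _ _
  have hx_le : 0 ≤ 1 - x := sub_nonneg.2 (hpair.contractionRate_le_one hgrad P.α_sq_le_one)
  have hNw : 0 ≤ P.N * P.weight t := mul_nonneg P.N_pos.le (P.weight_nonneg t)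
  have hgradErr : 2 * P.gradErr t ≤ P.N * P.weight t / 2 + 24 * P.ρ := by
    linarith [P.gradErr_le t, P.ρ_pos, mul_le_mul_of_nonneg_right P.m_le_N (P.weight_nonneg t)]
  calc |signal (a (t + 1)) (b (t + 1)) - B|
      ≤ (1 - x) * |signal (a t) (b t) - B| + x * (2 * P.gradErr t) := by
        rw [h.left_succ, h.right_succ]
        exact hpair.abs_signal_step_sub_le hgrad P.α_sq_le_one
    _ ≤ (1 - x) * (P.N * P.weight t + 24 * P.ρ) + x * (P.N * P.weight t / 2 + 24 * P.ρ) := by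
        gcongr
    _ = P.N * P.weight t * (1 - x / 2) + 24 * P.ρ := by ring
    _ ≤ P.N * P.weight t * (1 - P.η * P.m / 8) + 24 * P.ρ := by
        linarith [mul_le_mul_of_nonneg_left hx_ge hNw]
    _ = P.N * P.weight (t + 1) + 24 * P.ρ := by rw [P.weight_succ hwarm, mul_assoc]

lemma abs_signal_sub_le (h : StrongTrajectory P B T a b q) (ht : t ≤ T) :
    |signal (a t) (b t) - B| ≤ P.N * P.weight t + 24 * P.ρ := by
  rcases le_total t P.warmup with hearly | hlate
  · rw [P.weight_eq_one hearly]
    linarith [(h.trackingPair ht).abs_signal_sub_le, h.target_le, P.ρ_pos]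
  · induction t, hlate using Nat.le_induction with
    | base =>
      rw [P.weight_eq_one le_rfl]
      linarith [(h.trackingPair ht).abs_signal_sub_le, h.target_le, P.ρ_pos]
    | succ t hwarm ih =>
      exact h.abs_signal_sub_le_succ_of_warmup_le ht hwarm (ih (Nat.le_of_succ_le ht))

end StrongTrajectory

lemma DescentScales.abs_mul_le_α_sq_of_abs_grad_le (P : DescentScales) {t : ℕ}
    (ht : t * (P.η * P.ρ) ≤ 1 / 100) {g l r : ℕ → ℝ} (g_zero : g 0 = P.α) (l_zero : l 0 = 0)
    (g_succ : ∀ u, g (u + 1) = g u - P.η * (l u * r u))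
    (l_succ : ∀ u, l (u + 1) = l u - P.η * (g u * r u))
    (hr : ∀ u < t, |r u| ≤ P.gradErr u + 3 * P.ρ) : |g t * l t| ≤ P.α ^ 2 := by
  have hexp : Real.exp (∑ u ∈ Finset.range t, P.η * (P.gradErr u + 3 * P.ρ)) ≤ 2 := by
    rw [← Real.le_log_iff_exp_le two_pos]
    linarith [P.η_mul_sum_gradErr_le ht, Real.log_two_gt_d9]
  have hstep (u : ℕ) (hu : u < t) : |P.η * r u| ≤ P.η * (P.gradErr u + 3 * P.ρ) := by
    rw [abs_mul, abs_of_pos P.η_pos]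
    exact mul_le_mul_of_nonneg_left (hr u hu) P.η_pos.le
  have hadd := abs_le_mul_exp_sum (x := fun u => g u + l u) (d := fun u => -(P.η * r u))
    (fun u _ => by simp only [g_succ, l_succ]; ring)
    (fun u hu => (abs_neg _).trans_le (hstep u hu))
  have hsub := abs_le_mul_exp_sum (x := fun u => g u - l u) (d := fun u => P.η * r u)
    (fun u _ => by simp only [g_succ, l_succ]; ring) hstep
  simp only [g_zero, l_zero, add_zero, sub_zero, abs_of_pos P.α_pos] at hadd hsub
  have hdouble := mul_le_mul_of_nonneg_left hexp P.α_pos.le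
  exact abs_mul_le_sq_of_abs_add_sub_le (by linarith) (by linarith)

/-! ### Coupling the coordinates -/

/-- Gradient descent on `g ∘ l` with gradients `r`, each of whose coordinates deviates from the
orthonormal noiseless gradient `g ∘ l - β` by an amount controlled by the largest error `M` on the
strong set `S₁`, as long as the other coordinates stay below `α²`. -/
structure PerturbedDescent {ι : Type*} (P : DescentScales) (S₁ : Set ι) (β : ι → ℝ)
    (g l r : ℕ → ι → ℝ) : Prop where
  g_zero : ∀ j, g 0 j = P.α
  l_zero : ∀ j, l 0 j = 0
  g_succ : ∀ t j, g (t + 1) j = g t j - P.η * (l t j * r t j)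
  l_succ : ∀ t j, l (t + 1) j = l t j - P.η * (g t j * r t j)
  m_le : ∀ j ∈ S₁, P.m ≤ |β j|
  le_N : ∀ j ∈ S₁, |β j| ≤ P.N
  weak_le : ∀ j ∉ S₁, |β j| ≤ 2 * P.ρ
  abs_grad_sub_le : ∀ t M, 3 * P.ρ ≤ M → (∀ k ∈ S₁, |g t k * l t k - β k| ≤ M) →
    (∀ k ∉ S₁, |g t k * l t k| ≤ P.α ^ 2) →
    ∀ j, |r t j - (g t j * l t j - β j)| ≤ P.θ * M + 5 * P.ρ

namespace PerturbedDescent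

variable {ι : Type*} {P : DescentScales} {S₁ : Set ι} {β : ι → ℝ} {g l r : ℕ → ι → ℝ} {t : ℕ}

/-- The invariant of the descent at time `t`: the error on the strong coordinates has decayed by
`P.weight t`, down to the noise level, and the other coordinates have not left the scale of the
initialization. -/
def Controlled (P : DescentScales) (S₁ : Set ι) (β g l : ι → ℝ) (t : ℕ) : Prop :=
  (∀ k ∈ S₁, |g k * l k - β k| ≤ P.N * P.weight t + 24 * P.ρ) ∧
    ∀ k ∉ S₁, |g k * l k| ≤ P.α ^ 2

lemma abs_grad_sub_le_gradErr (h : PerturbedDescent P S₁ β g l r)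
    (ht : Controlled P S₁ β (g t) (l t) t) (j : ι) :
    |r t j - (g t j * l t j - β j)| ≤ P.gradErr t := by
  have hM : 3 * P.ρ ≤ P.N * P.weight t + 24 * P.ρ := by
    linarith [P.ρ_pos, mul_nonneg P.N_pos.le (P.weight_nonneg t)]
  calc |r t j - (g t j * l t j - β j)|
      ≤ P.θ * (P.N * P.weight t + 24 * P.ρ) + 5 * P.ρ := h.abs_grad_sub_le t _ hM ht.1 ht.2 j
    _ = P.θ * P.N * P.weight t + 24 * (P.θ * P.ρ) + 5 * P.ρ := by ring
    _ ≤ P.gradErr t := by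
        unfold DescentScales.gradErr
        linarith [mul_le_mul_of_nonneg_right P.θ_mul_N_le (P.weight_nonneg t),
          mul_le_mul_of_nonneg_right P.θ_le P.ρ_pos.le, P.ρ_pos]

lemma exists_strongTrajectory (h : PerturbedDescent P S₁ β g l r)
    (ht : ∀ u < t, Controlled P S₁ β (g u) (l u) u) {j : ι} (hj : j ∈ S₁) :
    ∃ a b q : ℕ → ℝ, StrongTrajectory P |β j| t a b q ∧
      (∀ u, |signal (a u) (b u)| = |g u j * l u j|) ∧
      ∀ u, abs (signal (a u) (b u) - |β j|) = |g u j * l u j - β j| := by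
  obtain ⟨ς, hς, hςβ⟩ := RCLike.exists_norm_eq_mul_self (β j)
  replace hς : |ς| = 1 := hς
  replace hςβ : |β j| = ς * β j := hςβ
  have hςς : ς * ς = 1 := by rw [← abs_mul_abs_self, hς, one_mul]
  have hsignal (u : ℕ) : signal (g u j + ς * l u j) (g u j - ς * l u j) = ς * (g u j * l u j) := by
    unfold signal
    ring
  refine ⟨fun u => g u j + ς * l u j, fun u => g u j - ς * l u j, fun u => -(ς * r u j),
    ⟨h.m_le j hj, h.le_N j hj, by simp [h.g_zero, h.l_zero], by simp [h.g_zero, h.l_zero],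
      fun u => ?_, fun u => ?_, fun u hu => ?_⟩, fun u => ?_, fun u => ?_⟩
  · rw [h.g_succ, h.l_succ]
    linear_combination P.η * l u j * r u j * hςς
  · rw [h.g_succ, h.l_succ]
    linear_combination P.η * l u j * r u j * hςς
  · calc abs (-(ς * r u j) - (|β j| - signal (g u j + ς * l u j) (g u j - ς * l u j)))
        = |-ς * (r u j - (g u j * l u j - β j))| := by
          rw [hsignal, hςβ]
          ring_nf
      _ ≤ P.gradErr u := by
          rw [abs_mul, abs_neg, hς, one_mul]
          exact h.abs_grad_sub_le_gradErr (ht u hu) j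
  · rw [hsignal, abs_mul, hς, one_mul]
  · rw [hsignal, hςβ, ← mul_sub, abs_mul, hς, one_mul]

lemma abs_mul_le_of_notMem (h : PerturbedDescent P S₁ β g l r)
    (ht : ∀ u < t, Controlled P S₁ β (g u) (l u) u) (htime : t * (P.η * P.ρ) ≤ 1 / 100) {j : ι}
    (hj : j ∉ S₁) : |g t j * l t j| ≤ P.α ^ 2 := by
  refine P.abs_mul_le_α_sq_of_abs_grad_le (g := (g · j)) (l := (l · j)) htime (h.g_zero j)
    (h.l_zero j) (fun u => h.g_succ u j) (fun u => h.l_succ u j) fun u hu => ?_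
  have hgrad := h.abs_grad_sub_le_gradErr (ht u hu) j
  have hproduct := (ht u hu).2 j hj
  have hβ := h.weak_le j hj
  have hα := P.α_sq_le
  rw [abs_le] at *
  constructor <;> linarith

lemma controlled (h : PerturbedDescent P S₁ β g l r) (htime : t * (P.η * P.ρ) ≤ 1 / 100) :
    Controlled P S₁ β (g t) (l t) t := by
  induction t using Nat.strong_induction_on with
  | h t ih =>
    have hpast (u : ℕ) (hu : u < t) : Controlled P S₁ β (g u) (l u) u := by
      refine ih u hu (le_trans ?_ htime)
      have := P.η_pos
      have := P.ρ_pos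
      gcongr
    refine ⟨fun j hj => ?_, fun j hj => h.abs_mul_le_of_notMem hpast htime hj⟩
    obtain ⟨a, b, q, htraj, -, herr⟩ := h.exists_strongTrajectory hpast hj
    exact (herr t).symm.trans_le (htraj.abs_signal_sub_le le_rfl)

lemma div_eight_le_abs_of_mem (h : PerturbedDescent P S₁ β g l r)
    (htime : t * (P.η * P.ρ) ≤ 1 / 100) (hwarm : P.warmup ≤ t) {j : ι} (hj : j ∈ S₁) :
    P.m / 8 ≤ |g t j * l t j| := by
  have hpast (u : ℕ) (hu : u < t) : Controlled P S₁ β (g u) (l u) u := by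
    refine h.controlled (le_trans ?_ htime)
    have := P.η_pos
    have := P.ρ_pos
    gcongr
  obtain ⟨a, b, q, htraj, habs, -⟩ := h.exists_strongTrajectory hpast hj
  rw [← habs]
  exact (htraj.div_eight_le_signal le_rfl hwarm).trans (le_abs_self _)

end PerturbedDescent

/-! ### The linear model -/

lemma support_hardThreshold_eq {ι : Type*} {f : ι → ℝ} {S : Set ι} {lam : ℝ} (hlam : 0 < lam)
    (hS : ∀ j ∈ S, lam ≤ |f j|) (hSc : ∀ j ∉ S, |f j| < lam) :
    {j | (if lam ≤ |f j| then f j else 0) ≠ 0} = S := by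
  ext j
  rw [Set.mem_ofPred_eq, ite_ne_right_iff]
  refine ⟨fun hj => by_contra fun hjS => (hSc j hjS).not_ge hj.1, fun hj => ⟨hS j hj, ?_⟩⟩
  exact abs_pos.1 (hlam.trans_le (hS j hj))

/-- The relations between the scales of the problem that hold as soon as the window of stopping
times and the window of thresholds in the theorem are both nonempty. -/
structure ScaleSeparation (n p s1 : ℕ) (βs : Fin p → ℝ) (σ α : ℝ) : Prop where
  four_div_le_noiseLevel : 4 / (p : ℝ) ≤ noiseLevel n p σ
  noiseLevel_le : 400 * Real.log (p / α) * noiseLevel n p σ ≤ theta s1 βs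

namespace Assumptions

variable {n p s s1 s2 : ℕ} {X : Matrix (Fin n) (Fin p) ℝ} {βs : Fin p → ℝ} {σ α η δ : ℝ}

lemma card_pos (h : Assumptions s s1 s2 X βs σ α η δ 1 (1 / 100)) : (0 : ℝ) < p :=
  Nat.cast_pos.2 h.2.1

lemma one_le_card (h : Assumptions s s1 s2 X βs σ α η δ 1 (1 / 100)) : (1 : ℝ) ≤ p :=
  Nat.one_le_cast.2 h.2.1

lemma α_pos (h : Assumptions s s1 s2 X βs σ α η δ 1 (1 / 100)) : 0 < α := by
  obtain ⟨-, -, -, -, -, -, -, -, -, -, -, -, -, hα, -⟩ := h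
  exact hα

lemma η_pos (h : Assumptions s s1 s2 X βs σ α η δ 1 (1 / 100)) : 0 < η := by
  obtain ⟨-, -, -, -, -, -, -, -, -, -, -, -, -, -, -, hη, -⟩ := h
  exact hη

lemma α_mul_le (h : Assumptions s s1 s2 X βs σ α η δ 1 (1 / 100)) : α * p ≤ 1 / 100 := by
  have hp := h.card_pos
  obtain ⟨-, -, -, -, -, -, -, -, -, -, -, -, -, -, hα, -⟩ := h
  exact (le_div_iff₀ hp).1 hα

lemma α_le (h : Assumptions s s1 s2 X βs σ α η δ 1 (1 / 100)) : α ≤ 1 / 100 :=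
  (le_mul_of_one_le_right h.α_pos.le h.one_le_card).trans h.α_mul_le

lemma one_le_log (h : Assumptions s s1 s2 X βs σ α η δ 1 (1 / 100)) :
    1 ≤ Real.log (p / α) := by
  rw [Real.le_log_iff_exp_le (div_pos h.card_pos h.α_pos), le_div_iff₀ h.α_pos]
  nlinarith [Real.exp_one_lt_d9, h.α_le, h.α_pos, h.one_le_card]

lemma neg_log_le (h : Assumptions s s1 s2 X βs σ α η δ 1 (1 / 100)) :
    -Real.log α ≤ Real.log (p / α) := by
  rw [Real.log_div h.card_pos.ne' h.α_pos.ne']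
  linarith [Real.log_nonneg h.one_le_card]

-- Otherwise the upper bound on `η` would be nonpositive, by the convention `x / 0 = 0` if `m = 0`.
lemma theta_pos (h : Assumptions s s1 s2 X βs σ α η δ 1 (1 / 100)) : 0 < theta s1 βs := by
  have hL := h.one_le_log
  have hη := h.η_pos
  obtain ⟨-, -, -, -, -, -, -, -, -, -, -, -, -, -, -, -, hη_le⟩ := h
  by_contra! hm
  have hκ : nrmInf βs / theta s1 βs ≤ 0 := div_nonpos_of_nonneg_of_nonpos (nrmInf_nonneg βs) hm
  have hbound : 1 / 100 / (nrmInf βs / theta s1 βs * Real.log (p / α)) ≤ 0 :=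
    div_nonpos_of_nonneg_of_nonpos (by norm_num)
      (mul_nonpos_of_nonpos_of_nonneg hκ (by linarith))
  linarith

lemma nrmInf_le_one (h : Assumptions s s1 s2 X βs σ α η δ 1 (1 / 100)) : nrmInf βs ≤ 1 := by
  have hm := h.theta_pos
  obtain ⟨-, -, -, -, -, -, -, -, -, -, hκm, -⟩ := h
  rwa [div_mul_cancel₀ _ hm.ne'] at hκm

lemma one_le_kappa_mul_log (h : Assumptions s s1 s2 X βs σ α η δ 1 (1 / 100)) :
    1 ≤ nrmInf βs / theta s1 βs * Real.log (p / α) :=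
  one_le_mul_of_one_le_of_one_le ((one_le_div h.theta_pos).2 (theta_le_nrmInf s1 βs)) h.one_le_log

lemma η_le (h : Assumptions s s1 s2 X βs σ α η δ 1 (1 / 100)) : η ≤ 1 / 100 := by
  have hκL := h.one_le_kappa_mul_log
  obtain ⟨-, -, -, -, -, -, -, -, -, -, -, -, -, -, -, -, hη⟩ := h
  exact hη.trans (div_le_self (by norm_num) hκL)

lemma noiseLevel_nonneg (h : Assumptions s s1 s2 X βs σ α η δ 1 (1 / 100)) :
    0 ≤ noiseLevel n p σ :=
  mul_nonneg h.2.2.1 (Real.sqrt_nonneg _)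

lemma abs_le_of_notMem_strongSet (h : Assumptions s s1 s2 X βs σ α η δ 1 (1 / 100)) {j : Fin p}
    (hj : j ∉ strongSet n βs σ) : |βs j| ≤ 2 * noiseLevel n p σ := by
  by_cases hβ : βs j = 0
  · rw [hβ, abs_zero]
    exact mul_nonneg zero_le_two h.noiseLevel_nonneg
  · obtain ⟨-, -, -, -, -, -, -, -, -, hsupp, -⟩ := h
    have hmem : j ∈ strongSet n βs σ ∪ weakSet n βs σ := hsupp ▸ hβ
    rw [noiseLevel, ← mul_assoc]
    exact (hmem.resolve_left hj).2

lemma mul_noiseLevel_le (h : Assumptions s s1 s2 X βs σ α η δ 1 (1 / 100))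
    (hρ : 0 < noiseLevel n p σ) {t : ℕ} (ht : (t : ℝ) ≤ 1 / 100 / (η * tauStat n p σ α δ)) :
    t * (η * noiseLevel n p σ) ≤ 1 / 100 := by
  have hη := h.η_pos
  have hτ : noiseLevel n p σ ≤ tauStat n p σ α δ := le_max_right _ _
  rw [le_div_iff₀ (mul_pos hη (hρ.trans_le hτ))] at ht
  refine le_trans ?_ ht
  gcongr

lemma scaleSeparation (h : Assumptions s s1 s2 X βs σ α η δ 1 (1 / 100)) {t : ℕ} {lam : ℝ}
    (ht_ge : 4 * Real.log (p / α) / (η * theta s1 βs) ≤ t)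
    (ht_le : (t : ℝ) ≤ 1 / 100 / (η * tauStat n p σ α δ)) (hlam_ge : 1 / (p : ℝ) ≤ lam)
    (hlam_le : lam ≤ 1 / 4 * σ * √(Real.log p / n)) : ScaleSeparation n p s1 βs σ α := by
  have hp := h.card_pos
  have hρ : 4 / (p : ℝ) ≤ noiseLevel n p σ := by
    rw [noiseLevel]
    linarith [show 4 / (p : ℝ) = 4 * (1 / p) by ring]
  have hρ_pos : 0 < noiseLevel n p σ := (by positivity : 0 < 4 / (p : ℝ)).trans_le hρ
  have htime := h.mul_noiseLevel_le hρ_pos ht_le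
  have hm := h.theta_pos
  have hη := h.η_pos
  refine ⟨hρ, ?_⟩
  have hratio : 4 * Real.log (p / α) * noiseLevel n p σ / theta s1 βs ≤ 1 / 100 :=
    calc 4 * Real.log (p / α) * noiseLevel n p σ / theta s1 βs
        = 4 * Real.log (p / α) / (η * theta s1 βs) * (η * noiseLevel n p σ) := by field_simp
      _ ≤ t * (η * noiseLevel n p σ) := by gcongr
      _ ≤ 1 / 100 := htime
  rw [div_le_iff₀ hm] at hratio
  linarith

lemma noiseLevel_pos (h : Assumptions s s1 s2 X βs σ α η δ 1 (1 / 100))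
    (hsep : ScaleSeparation n p s1 βs σ α) : 0 < noiseLevel n p σ :=
  (div_pos four_pos h.card_pos).trans_le hsep.four_div_le_noiseLevel

lemma noiseLevel_mul_le_theta (h : Assumptions s s1 s2 X βs σ α η δ 1 (1 / 100))
    (hsep : ScaleSeparation n p s1 βs σ α) : 400 * noiseLevel n p σ ≤ theta s1 βs := by
  nlinarith [h.one_le_log, h.noiseLevel_pos hsep, hsep.noiseLevel_le]

lemma one_le_s1 (h : Assumptions s s1 s2 X βs σ α η δ 1 (1 / 100))
    (hsep : ScaleSeparation n p s1 βs σ α) : 1 ≤ s1 := by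
  by_contra! hs1
  have hempty : strongSet n βs σ = ∅ := by
    obtain ⟨-, -, -, -, -, -, hcard, -⟩ := h
    rwa [Nat.lt_one_iff.1 hs1, Set.ncard_eq_zero] at hcard
  have htheta : theta s1 βs ≤ 2 * noiseLevel n p σ :=
    theta_le_of_forall_abs_le (mul_nonneg zero_le_two h.noiseLevel_nonneg) fun j =>
      h.abs_le_of_notMem_strongSet (by simp [hempty])
  linarith [h.noiseLevel_mul_le_theta hsep, h.noiseLevel_pos hsep]

lemma one_le_s (h : Assumptions s s1 s2 X βs σ α η δ 1 (1 / 100))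
    (hsep : ScaleSeparation n p s1 βs σ α) : 1 ≤ s := by
  have hs1 := h.one_le_s1 hsep
  obtain ⟨-, -, -, -, -, -, -, -, hs, -⟩ := h
  omega

lemma one_lt_log_card (h : Assumptions s s1 s2 X βs σ α η δ 1 (1 / 100))
    (hsep : ScaleSeparation n p s1 βs σ α) : 1 < Real.log p := by
  have hp := h.card_pos
  have hp_inv : 4 / (p : ℝ) ≤ 1 / 400 := by
    linarith [hsep.four_div_le_noiseLevel, h.noiseLevel_mul_le_theta hsep,
      theta_le_nrmInf s1 βs, h.nrmInf_le_one]
  rw [div_le_iff₀ hp] at hp_inv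
  rw [Real.lt_log_iff_exp_lt hp]
  linarith [Real.exp_one_lt_d9]

lemma theta_le_abs_of_mem_strongSet (h : Assumptions s s1 s2 X βs σ α η δ 1 (1 / 100))
    (hsep : ScaleSeparation n p s1 βs σ α) {j : Fin p} (hj : j ∈ strongSet n βs σ) :
    theta s1 βs ≤ |βs j| := by
  have hstrong : 2 * noiseLevel n p σ < |βs j| := by
    have hρ := mul_lt_mul_of_pos_left (h.one_lt_log_card hsep) (h.noiseLevel_pos hsep)
    have hj' : 2 * (noiseLevel n p σ * Real.log p) ≤ |βs j| :=
      (by rw [noiseLevel]; ring : _ = _).trans_le hj.2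
    linarith
  have hlarger : {k | |βs j| < |βs k|} ⊆ strongSet n βs σ \ {j} := by
    refine fun k hk => ⟨by_contra fun hkS => ?_, ?_⟩
    · exact (hstrong.trans hk).not_ge (h.abs_le_of_notMem_strongSet hkS)
    · rintro rfl
      exact lt_irrefl |βs k| hk
  obtain ⟨-, -, -, -, -, -, hcard, -⟩ := h
  refine theta_le_of_ncard_le (abs_nonneg _) ((Set.ncard_le_ncard hlarger).trans_eq ?_)
  rw [Set.ncard_sdiff_singleton_of_mem hj, hcard]

lemma δ_mul_sqrt_le (h : Assumptions s s1 s2 X βs σ α η δ 1 (1 / 100))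
    (hsep : ScaleSeparation n p s1 βs σ α) :
    δ * √s ≤ 1 / 100 / (nrmInf βs / theta s1 βs * Real.log (p / α)) := by
  have hs : (0 : ℝ) < √s := Real.sqrt_pos.2 (Nat.cast_pos.2 (h.one_le_s hsep))
  obtain ⟨-, -, -, -, -, -, -, -, -, -, -, -, hδ, -⟩ := h
  rwa [mul_right_comm, ← div_div, le_div_iff₀ hs] at hδ

lemma δ_mul_sqrt_le_one_div (h : Assumptions s s1 s2 X βs σ α η δ 1 (1 / 100))
    (hsep : ScaleSeparation n p s1 βs σ α) : δ * √s ≤ 1 / 100 :=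
  (h.δ_mul_sqrt_le hsep).trans (div_le_self (by norm_num) h.one_le_kappa_mul_log)

lemma δ_le_one (h : Assumptions s s1 s2 X βs σ α η δ 1 (1 / 100))
    (hsep : ScaleSeparation n p s1 βs σ α) : δ ≤ 1 := by
  have hs : (1 : ℝ) ≤ √s := Real.one_le_sqrt.2 (Nat.one_le_cast.2 (h.one_le_s hsep))
  linarith [le_mul_of_one_le_right h.2.2.2.1 hs, h.δ_mul_sqrt_le_one_div hsep]

lemma δ_mul_sqrt_mul_nrmInf_le (h : Assumptions s s1 s2 X βs σ α η δ 1 (1 / 100))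
    (hsep : ScaleSeparation n p s1 βs σ α) :
    δ * √s * nrmInf βs ≤ theta s1 βs / (100 * Real.log (p / α)) := by
  have hm := h.theta_pos
  have hN : 0 < nrmInf βs := hm.trans_le (theta_le_nrmInf s1 βs)
  have hL : 0 < Real.log (p / α) := one_pos.trans_le h.one_le_log
  refine (mul_le_mul_of_nonneg_right (h.δ_mul_sqrt_le hsep) hN.le).trans_eq ?_
  field_simp

lemma card_mul_α_sq_le (h : Assumptions s s1 s2 X βs σ α η δ 1 (1 / 100))
    (hsep : ScaleSeparation n p s1 βs σ α) : p * α ^ 2 ≤ noiseLevel n p σ := by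
  have hα := h.α_pos
  have hαp := h.α_mul_le
  calc p * α ^ 2 = α * p * α := by ring
    _ ≤ 1 * α := by gcongr; linarith
    _ ≤ 4 / p := by rw [le_div_iff₀ h.card_pos]; linarith
    _ ≤ noiseLevel n p σ := hsep.four_div_le_noiseLevel

lemma α_sq_le (h : Assumptions s s1 s2 X βs σ α η δ 1 (1 / 100))
    (hsep : ScaleSeparation n p s1 βs σ α) : α ^ 2 ≤ noiseLevel n p σ :=
  (le_mul_of_one_le_left (sq_nonneg α) h.one_le_card).trans (h.card_mul_α_sq_le hsep)

lemma α_sq_lt_one_div (h : Assumptions s s1 s2 X βs σ α η δ 1 (1 / 100)) : α ^ 2 < 1 / p := by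
  have hα := h.α_pos
  have hα_le := h.α_le
  have hαp := h.α_mul_le
  rw [lt_div_iff₀ h.card_pos]
  calc α ^ 2 * p = α * (α * p) := by ring
    _ ≤ 1 / 100 * (1 / 100) := by gcongr
    _ < 1 := by norm_num

/-- The scales of the linear model, with `m = θ_{s1}(β*)`, `N = ‖β*‖_∞` and `L = log (p / α)`. -/
def scales (h : Assumptions s s1 s2 X βs σ α η δ 1 (1 / 100))
    (hsep : ScaleSeparation n p s1 βs σ α) : DescentScales where
  η := η
  α := α
  m := theta s1 βs
  N := nrmInf βs
  L := Real.log (p / α)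
  θ := δ * √s
  ρ := noiseLevel n p σ
  η_pos := h.η_pos
  η_le := h.η_le
  α_pos := h.α_pos
  α_sq_le := h.α_sq_le hsep
  m_pos := h.theta_pos
  m_le_N := theta_le_nrmInf s1 βs
  N_le_one := h.nrmInf_le_one
  one_le_L := h.one_le_log
  neg_log_α_le := h.neg_log_le
  noise_le := hsep.noiseLevel_le
  θ_le := h.δ_mul_sqrt_le_one_div hsep
  θ_mul_N_le := h.δ_mul_sqrt_mul_nrmInf_le hsep

lemma abs_gramDefect_mulVec_sub_le (h : Assumptions s s1 s2 X βs σ α η δ 1 (1 / 100))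
    (hsep : ScaleSeparation n p s1 βs σ α) {β : Fin p → ℝ} {M : ℝ}
    (hM : 3 * noiseLevel n p σ ≤ M) (hstrong : ∀ k ∈ strongSet n βs σ, |β k - βs k| ≤ M)
    (hweak : ∀ k ∉ strongSet n βs σ, |β k| ≤ α ^ 2) (j : Fin p) :
    |(gramDefect X *ᵥ (β - βs)) j| ≤ δ * √s * M + noiseLevel n p σ := by
  classical
  have hρ := h.noiseLevel_nonneg
  have hentry_le (k : Fin p) : |β k - βs k| ≤ M := by
    by_cases hk : k ∈ strongSet n βs σ
    · exact hstrong k hk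
    · linarith [abs_sub (β k) (βs k), hweak k hk, h.abs_le_of_notMem_strongSet hk,
        h.α_sq_le hsep]
  have hoff_support :
      ∑ k ∈ (suppSet βs).toFinsetᶜ, |β k - βs k| ≤ noiseLevel n p σ := by
    have hentry (k : Fin p) (hk : k ∈ (suppSet βs).toFinsetᶜ) : |β k - βs k| ≤ α ^ 2 := by
      have hβ : βs k = 0 := by_contra fun hβ => Finset.mem_compl.1 hk (Set.mem_toFinset.2 hβ)
      rw [hβ, sub_zero]
      exact hweak k fun hmem => hmem.1 hβ
    calc ∑ k ∈ (suppSet βs).toFinsetᶜ, |β k - βs k|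
        ≤ (suppSet βs).toFinsetᶜ.card • α ^ 2 := Finset.sum_le_card_nsmul _ _ _ hentry
      _ ≤ p * α ^ 2 := by
        rw [nsmul_eq_mul]
        gcongr
        exact (Finset.card_le_univ _).trans_eq (Fintype.card_fin p)
      _ ≤ noiseLevel n p σ := h.card_mul_α_sq_le hsep
  have hs := h.one_le_s hsep
  have hδ_le := h.δ_le_one hsep
  obtain ⟨-, -, -, hδ, -, hcard, -, -, -, -, -, hX, -⟩ := h
  rw [Set.ncard_eq_toFinset_card'] at hcard
  have hdefect := hX.abs_gramDefect_mulVec_le_of_tail (v := β - βs) hs hδ hcard.le (by linarith)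
    (fun k _ => hentry_le k) hoff_support j
  linarith [mul_le_of_le_one_left hρ hδ_le]

lemma perturbedDescent (h : Assumptions s s1 s2 X βs σ α η δ 1 (1 / 100))
    (hsep : ScaleSeparation n p s1 βs σ α) {w : Fin n → ℝ}
    (hw : ∀ j, |∑ i, (n : ℝ)⁻¹ * X i j * w i| ≤ 4 * noiseLevel n p σ) :
    PerturbedDescent (h.scales hsep) (strongSet n βs σ) βs
      (fun t => (glIter X (X *ᵥ βs + w) η α t).1) (fun t => (glIter X (X *ᵥ βs + w) η α t).2)
      (fun t => gradTerm X (X *ᵥ βs + w)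
        (had (glIter X (X *ᵥ βs + w) η α t).1 (glIter X (X *ᵥ βs + w) η α t).2)) where
  g_zero _ := rfl
  l_zero _ := rfl
  g_succ _ _ := rfl
  l_succ _ _ := rfl
  m_le _ hj := h.theta_le_abs_of_mem_strongSet hsep hj
  le_N j _ := abs_le_nrmInf βs j
  weak_le _ hj := h.abs_le_of_notMem_strongSet hj
  abs_grad_sub_le t M hM hstrong hweak j := by
    set β := had (glIter X (X *ᵥ βs + w) η α t).1 (glIter X (X *ᵥ βs + w) η α t).2
    have hdefect : |(gramDefect X *ᵥ (β - βs)) j| ≤ δ * √s * M + noiseLevel n p σ :=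
      h.abs_gramDefect_mulVec_sub_le hsep hM hstrong hweak j
    have hnoise : ((n : ℝ)⁻¹ • Xᵀ *ᵥ w) j = ∑ i, (n : ℝ)⁻¹ * X i j * w i := by
      simp [mulVec, dotProduct, Finset.mul_sum, mul_assoc]
    have hgrad : gradTerm X (X *ᵥ βs + w) β j - (β j - βs j) =
        (gramDefect X *ᵥ (β - βs)) j - ∑ i, (n : ℝ)⁻¹ * X i j * w i := by
      rw [gradTerm_eq_gramDefect, Pi.sub_apply, Pi.add_apply, Pi.sub_apply, hnoise]
      ring
    calc |gradTerm X (X *ᵥ βs + w) β j - (β j - βs j)|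
        ≤ |(gramDefect X *ᵥ (β - βs)) j| + |∑ i, (n : ℝ)⁻¹ * X i j * w i| :=
          hgrad ▸ abs_sub _ _
      _ ≤ (δ * √s * M + noiseLevel n p σ) + 4 * noiseLevel n p σ := add_le_add hdefect (hw j)
      _ = δ * √s * M + 5 * noiseLevel n p σ := by ring

lemma support_hardThreshold_glIter_eq (h : Assumptions s s1 s2 X βs σ α η δ 1 (1 / 100))
    (hsep : ScaleSeparation n p s1 βs σ α) {w : Fin n → ℝ}
    (hw : ∀ j, |∑ i, (n : ℝ)⁻¹ * X i j * w i| ≤ 4 * noiseLevel n p σ) {t : ℕ} {lam : ℝ}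
    (ht_ge : 4 * Real.log (p / α) / (η * theta s1 βs) ≤ t)
    (ht_le : (t : ℝ) ≤ 1 / 100 / (η * tauStat n p σ α δ)) (hlam_ge : 1 / (p : ℝ) ≤ lam)
    (hlam_le : lam ≤ 1 / 4 * σ * √(Real.log p / n)) :
    {j | (if lam ≤ |(glIter X (X *ᵥ βs + w) η α t).1 j * (glIter X (X *ᵥ βs + w) η α t).2 j| then
        (glIter X (X *ᵥ βs + w) η α t).1 j * (glIter X (X *ᵥ βs + w) η α t).2 j else 0) ≠ 0} =
      strongSet n βs σ := by
  have hdescent := h.perturbedDescent hsep hw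
  have htime := h.mul_noiseLevel_le (h.noiseLevel_pos hsep) ht_le
  have hα_lt : α ^ 2 < lam := h.α_sq_lt_one_div.trans_le hlam_ge
  have hlam_le_m : lam ≤ theta s1 βs / 8 := by
    rw [mul_assoc, ← noiseLevel] at hlam_le
    linarith [h.noiseLevel_mul_le_theta hsep, h.noiseLevel_pos hsep]
  refine support_hardThreshold_eq ((sq_nonneg α).trans_lt hα_lt) (fun j hj => ?_) fun j hj => ?_
  · exact hlam_le_m.trans (hdescent.div_eight_le_abs_of_mem htime (Nat.ceil_le.2 ht_ge) hj)
  · exact ((hdescent.controlled htime).2 j hj).trans_lt hα_lt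

lemma one_sub_inv_le_noiseMeasure (h : Assumptions s s1 s2 X βs σ α η δ 1 (1 / 100)) :
    1 - (p : ℝ)⁻¹ ≤ (noiseMeasure n σ).real {w | ScaleSeparation n p s1 βs σ α →
      ∀ j, |∑ i, (n : ℝ)⁻¹ * X i j * w i| ≤ 4 * noiseLevel n p σ} := by
  by_cases hsep : ScaleSeparation n p s1 βs σ α
  · simp only [hsep, true_imp_iff]
    have hs := h.one_le_s hsep
    have hδ_le := h.δ_le_one hsep
    refine one_sub_inv_le_noiseMeasure_abs_sum_le (h.noiseLevel_pos hsep) ?_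
    obtain ⟨-, -, -, -, -, -, -, -, -, -, -, hX, -⟩ := h
    exact hX.sum_sq_col_le hs hδ_le
  · simp only [hsep, false_imp_iff, Set.ofPred_true, probReal_univ]
    exact sub_le_self _ (by positivity)

end Assumptions

/-- Variable selection consistency (Theorem 3.3 of the paper): under Assumptions (A), (B), (C),
there are positive constants `c̃1, c̃2, c̃3, c̃4, c̃10, c̃11` such that with probability at
least `1 − p^{−c̃3} − n^{−c̃4}` over the Gaussian noise, for every iterate with
`c̃1·log(p/α)/(ηm) ≤ t ≤ c̃2/(ητ)` and every threshold `λ ∈ [c̃10/p, c̃11·σ√((log p)/n)]`,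
the hard-thresholded estimator `β'_t` has support exactly `S1`. -/
theorem stmt9 :
    ∃ C c c1 c2 c3 c4 c10 c11 : ℝ,
      0 < C ∧ 0 < c ∧ 0 < c1 ∧ 0 < c2 ∧ 0 < c3 ∧ 0 < c4 ∧ 0 < c10 ∧ 0 < c11 ∧
      ∀ (n p s s1 s2 : ℕ) (X : Matrix (Fin n) (Fin p) ℝ) (βs : Fin p → ℝ)
        (σ α η δ : ℝ),
        Assumptions s s1 s2 X βs σ α η δ C c →
        noiseMeasure n σ
            {w | ∀ t : ℕ,
              c1 * Real.log ((p : ℝ) / α) / (η * theta s1 βs) ≤ (t : ℝ) →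
              (t : ℝ) ≤ c2 / (η * tauStat n p σ α δ) →
              ∀ lam : ℝ, c10 / (p : ℝ) ≤ lam →
                lam ≤ c11 * σ * Real.sqrt (Real.log p / (n : ℝ)) →
                {j : Fin p |
                    (if lam ≤ |(glIter X (X.mulVec βs + w) η α t).1 j *
                          (glIter X (X.mulVec βs + w) η α t).2 j| then
                        (glIter X (X.mulVec βs + w) η α t).1 j *
                          (glIter X (X.mulVec βs + w) η α t).2 j
                      else 0) ≠ 0} = strongSet n βs σ} ≥
          ENNReal.ofReal (1 - (p : ℝ) ^ (-c3) - (n : ℝ) ^ (-c4)) := by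
  refine ⟨1, 1 / 100, 4, 1 / 100, 1, 1, 1, 1 / 4, by norm_num, by norm_num, by norm_num,
    by norm_num, by norm_num, by norm_num, by norm_num, by norm_num, ?_⟩
  intro n p s s1 s2 X βs σ α η δ h
  calc ENNReal.ofReal (1 - (p : ℝ) ^ (-1 : ℝ) - (n : ℝ) ^ (-1 : ℝ))
      ≤ ENNReal.ofReal (1 - (p : ℝ)⁻¹) := by
        rw [Real.rpow_neg_one, Real.rpow_neg_one]
        exact ENNReal.ofReal_le_ofReal (sub_le_self _ (by positivity))
    _ ≤ noiseMeasure n σ {w | ScaleSeparation n p s1 βs σ α →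
          ∀ j, |∑ i, (n : ℝ)⁻¹ * X i j * w i| ≤ 4 * noiseLevel n p σ} :=
        ENNReal.ofReal_le_of_le_toReal h.one_sub_inv_le_noiseMeasure
    _ ≤ _ := by
        refine measure_mono fun w hw t ht_ge ht_le lam hlam_ge hlam_le => ?_
        have hsep := h.scaleSeparation ht_ge ht_le hlam_ge hlam_le
        exact h.support_hardThreshold_glIter_eq hsep (hw hsep) ht_ge ht_le hlam_ge hlam_le
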